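/- Let (X, μ) be a standard Borel space with a non-atomic Borel probability measure μ. For every m, n ∈ ℕ and every pair of finite sequences of indices 1 ≤ k₁, …, k_p ≤ m and 1 ≤ l₁, …, l_q ≤ n, the set E = {(f₁,…,f_m,g₁,…,g_n) ∈ L⁰(μ,𝕋)^{m+n} : f_{k₁}⋯f_{k_p} ∩ g_{l₁}⋯g_{l_q} ≈ ∅} is comeager in L⁰(μ,𝕋)^{m+n}. -/

import Mathlib

open MeasureTheory Set

/-- The Borel σ-algebra on the circle group `𝕋 ⊆ ℂ`. -/
noncomputable instance : MeasurableSpace Circle := borel Circle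
instance : BorelSpace Circle := ⟨rfl⟩

/-- The metric `d(f,g) = ∫ |f − g| dμ` inducing the topology of convergence in measure
on `L⁰(μ, 𝕋)`. -/
noncomputable def L0dist {Y : Type*} [MeasurableSpace Y] (ν : Measure Y)
    (f g : Y →ₘ[ν] Circle) : ℝ :=
  ∫ x, ‖(f x : ℂ) - (g x : ℂ)‖ ∂ν

/-- The topology of convergence in measure on `L⁰(μ, 𝕋)`: the topology induced by the metric
`L0dist`, i.e. generated by the open balls of that metric. -/
noncomputable instance L0top {Y : Type*} [MeasurableSpace Y] (ν : Measure Y) :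
    TopologicalSpace (Y →ₘ[ν] Circle) :=
  TopologicalSpace.generateFrom
    {U | ∃ (f : Y →ₘ[ν] Circle) (ε : ℝ), 0 < ε ∧ U = {g | L0dist ν f g < ε}}

/-- The set of products `f₁(B)⋯f_m(B) = {f₁(x₁)⋯f_m(x_m) : x₁,…,x_m ∈ B}`. -/
def prodSet {X : Type*} {G : Type*} [Monoid G] {m : ℕ} (f : Fin m → X → G) (B : Set X) :
    Set G :=
  {g | ∃ x : Fin m → X, (∀ i, x i ∈ B) ∧ g = (List.ofFn fun i => f i (x i)).prod}

/-- `ρ_{m,n}(f₁,…,f_m,g₁,…,g_n)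
  = inf { μ(A) : A Borel, f₁(X∖A)⋯f_m(X∖A) ∩ g₁(X∖A)⋯g_n(X∖A) = ∅ }`. -/
noncomputable def rho {X : Type*} [MeasurableSpace X] {G : Type*} [Monoid G] {m n : ℕ}
    (μ : Measure X) (f : Fin m → X → G) (g : Fin n → X → G) : ℝ :=
  sInf {c : ℝ | ∃ A : Set X, MeasurableSet A ∧
    Disjoint (prodSet f Aᶜ) (prodSet g Aᶜ) ∧ c = (μ A).toReal}

/-!
Suppose that `f` and `g` take almost everywhere values in the `N`-th roots of `a` and of `b`
respectively, where `a ^ p ≠ b ^ q`. Then every product of `p` values of the `f`'s has `N`-th power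
`a ^ p`, and every product of `q` values of the `g`'s has `N`-th power `b ^ q`, so the two product
sets are disjoint. By compactness they stay disjoint when the sets of roots are replaced by small
open neighbourhoods, and functions close to `f` and `g` in measure take values in these
neighbourhoods outside a set of small measure: `ρ` is continuous at such tuples, with value `0`.
These tuples are dense, since the `N`-th roots of a point are `π / N`-dense in the circle, and a
function which tends to `0` at each point of a dense set vanishes on a comeager set.
-/

open Filter Topology
open scoped Pointwise

theorem residual_of_dense_tendsto {Y Z : Type*} [TopologicalSpace Y] [TopologicalSpace Z]
    [FirstCountableTopology Z] [T1Space Z] {φ : Y → Z} {c : Z}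
    (h : Dense {y | Tendsto φ (𝓝 y) (𝓝 c)}) : {y | φ y = c} ∈ residual Y := by
  obtain ⟨U, hU⟩ := (𝓝 c).exists_antitone_basis
  have h_interior (n : ℕ) : interior (φ ⁻¹' U n) ∈ residual Y :=
    residual_of_dense_open isOpen_interior <|
      h.mono fun y hy ↦ mem_interior_iff_mem_nhds.2 <|
        (show Tendsto φ (𝓝 y) (𝓝 c) from hy) (hU.mem n)
  filter_upwards [countable_iInter_mem.2 h_interior] with y hy
  have hy_mem (n : ℕ) : φ y ∈ U n := interior_subset (s := φ ⁻¹' U n) (mem_iInter.1 hy n)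
  have h_specializes : φ y ⤳ c := specializes_iff_pure.2 (hU.1.ge_iff.2 fun n _ ↦ hy_mem n)
  exact h_specializes.eq

theorem integrable_dist_of_boundedSpace {X Y : Type*} [MeasurableSpace X] {μ : Measure X}
    [IsFiniteMeasure μ] [PseudoMetricSpace Y] [BoundedSpace Y] {f g : X → Y}
    (hf : AEStronglyMeasurable f μ) (hg : AEStronglyMeasurable g μ) :
    Integrable (fun x ↦ dist (f x) (g x)) μ :=
  .of_bound (hf.dist hg) (Metric.diam (univ : Set Y)) <| .of_forall fun x ↦ by
    rw [Real.norm_of_nonneg dist_nonneg]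
    exact Metric.dist_le_diam_of_mem (Bornology.IsBounded.all _) (mem_univ _) (mem_univ _)

section TopologicalPowers

variable {M : Type*} [Monoid M] [TopologicalSpace M] [ContinuousMul M] {K L : Set M} {p q : ℕ}

theorem isCompact_pow (hK : IsCompact K) (p : ℕ) : IsCompact (K ^ p) := by
  induction p with
  | zero => exact isCompact_singleton
  | succ p ih => simpa only [pow_succ] using ih.mul hK

theorem exists_isOpen_pow_subset (hK : IsCompact K) {O : Set M} (hO : IsOpen O)
    (hKO : K ^ p ⊆ O) : ∃ V, IsOpen V ∧ K ⊆ V ∧ V ^ p ⊆ O := by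
  induction p generalizing O with
  | zero => exact ⟨univ, isOpen_univ, subset_univ K, by simpa using hKO⟩
  | succ p ih =>
    rw [pow_succ] at hKO
    obtain ⟨U, W, hU, hW, hKU, hKW, hUW⟩ := generalized_tube_lemma (isCompact_pow hK p) hK
      (hO.preimage continuous_mul) (image_subset_iff.1 (image_mul_prod.trans_subset hKO))
    obtain ⟨V, hV, hKV, hVU⟩ := ih hU hKU
    refine ⟨V ∩ W, hV.inter hW, subset_inter hKV hKW, ?_⟩
    rw [pow_succ, ← image_mul_prod, image_subset_iff]
    exact (prod_mono ((pow_subset_pow_left inter_subset_left).trans hVU) inter_subset_right).trans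
      hUW

theorem exists_isOpen_disjoint_pow [T2Space M] (hK : IsCompact K) (hL : IsCompact L)
    (hKL : Disjoint (K ^ p) (L ^ q)) :
    ∃ V W, IsOpen V ∧ IsOpen W ∧ K ⊆ V ∧ L ⊆ W ∧ Disjoint (V ^ p) (W ^ q) := by
  obtain ⟨O, O', hO, hO', hKO, hLO', hOO'⟩ :=
    SeparatedNhds.of_isCompact_isCompact (isCompact_pow hK p) (isCompact_pow hL q) hKL
  obtain ⟨V, hV, hKV, hVO⟩ := exists_isOpen_pow_subset hK hO hKO
  obtain ⟨W, hW, hLW, hWO'⟩ := exists_isOpen_pow_subset hL hO' hLO'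
  exact ⟨V, W, hV, hW, hKV, hLW, hOO'.mono hVO hWO'⟩

end TopologicalPowers

section RootPowers

variable {M : Type*} [CommMonoid M] {p q : ℕ}

theorem pow_eq_of_mem_roots_pow {N : ℕ} {a z : M} (hz : z ∈ {w : M | w ^ N = a} ^ p) :
    z ^ N = a ^ p := by
  have h_image : powMonoidHom N '' ({w : M | w ^ N = a} ^ p) ⊆ {a ^ p} := by
    rw [image_pow, ← singleton_pow]
    exact pow_subset_pow_left (image_subset_iff.2 fun w hw ↦ hw)
  exact h_image (mem_image_of_mem _ hz)

theorem disjoint_roots_pow {a b : M} (hab : a ^ p ≠ b ^ q) (N : ℕ) :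
    Disjoint ({z : M | z ^ N = a} ^ p) ({z : M | z ^ N = b} ^ q) :=
  disjoint_left.2 fun _ hp hq ↦
    hab ((pow_eq_of_mem_roots_pow hp).symm.trans (pow_eq_of_mem_roots_pow hq))

end RootPowers

section Rho

variable {X G : Type*} [Monoid G] {p q : ℕ}

theorem prodSet_subset_pow {f : Fin p → X → G} {B : Set X} {V : Set G}
    (h : ∀ i, MapsTo (f i) B V) : prodSet f B ⊆ V ^ p := by
  rintro _ ⟨x, hx, rfl⟩
  exact mem_pow.2 ⟨fun i ↦ ⟨f i (x i), h i (hx i)⟩, rfl⟩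

variable [MeasurableSpace X] {μ : Measure X} {f : Fin p → X → G} {g : Fin q → X → G}

theorem rho_nonneg : 0 ≤ rho μ f g :=
  Real.sInf_nonneg <| by
    rintro _ ⟨A, -, -, rfl⟩
    exact ENNReal.toReal_nonneg

theorem rho_le_measureReal {A : Set X} (hA : MeasurableSet A)
    (hfg : Disjoint (prodSet f Aᶜ) (prodSet g Aᶜ)) : rho μ f g ≤ μ.real A :=
  csInf_le ⟨0, by rintro _ ⟨A, -, -, rfl⟩; exact ENNReal.toReal_nonneg⟩ ⟨A, hA, hfg, rfl⟩

theorem rho_le_sum_measureReal [MeasurableSpace G] (hf : ∀ i, Measurable (f i))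
    (hg : ∀ j, Measurable (g j)) {V W : Set G} (hV : MeasurableSet V) (hW : MeasurableSet W)
    (hVW : Disjoint (V ^ p) (W ^ q)) :
    rho μ f g ≤ ∑ i, μ.real (f i ⁻¹' Vᶜ) + ∑ j, μ.real (g j ⁻¹' Wᶜ) := by
  set A := (⋃ i, f i ⁻¹' Vᶜ) ∪ ⋃ j, g j ⁻¹' Wᶜ
  have hA : MeasurableSet A :=
    (MeasurableSet.iUnion fun i ↦ hf i hV.compl).union (.iUnion fun j ↦ hg j hW.compl)
  have hfV (i : Fin p) : MapsTo (f i) Aᶜ V := fun x hx ↦ by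
    by_contra hxV
    exact hx (.inl (mem_iUnion.2 ⟨i, hxV⟩))
  have hgW (j : Fin q) : MapsTo (g j) Aᶜ W := fun x hx ↦ by
    by_contra hxW
    exact hx (.inr (mem_iUnion.2 ⟨j, hxW⟩))
  calc rho μ f g
      ≤ μ.real A :=
        rho_le_measureReal hA (hVW.mono (prodSet_subset_pow hfV) (prodSet_subset_pow hgW))
    _ ≤ μ.real (⋃ i, f i ⁻¹' Vᶜ) + μ.real (⋃ j, g j ⁻¹' Wᶜ) := measureReal_union_le _ _
    _ ≤ _ := add_le_add (measureReal_iUnion_fintype_le _) (measureReal_iUnion_fintype_le _)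

-- Both product sets are `{1}`, so no set is admissible and `sInf ∅ = 0`.
theorem rho_fin_zero (f g : Fin 0 → X → G) : rho μ f g = 0 := by
  have h_one (f : Fin 0 → X → G) (B : Set X) : 1 ∈ prodSet f B :=
    ⟨Fin.elim0, fun i ↦ i.elim0, by simp⟩
  have h_empty : {c : ℝ | ∃ A : Set X, MeasurableSet A ∧
      Disjoint (prodSet f Aᶜ) (prodSet g Aᶜ) ∧ c = (μ A).toReal} = ∅ :=
    eq_empty_of_forall_notMem fun _ ⟨A, _, hfg, _⟩ ↦
      disjoint_left.1 hfg (h_one f Aᶜ) (h_one g Aᶜ)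
  rw [rho, h_empty, Real.sInf_empty]

end Rho

section Roots

theorem dist_circle_eq_norm_sub (z w : Circle) : dist z w = ‖(z : ℂ) - w‖ :=
  Complex.dist_eq z w

theorem exists_pow_ne_pow {p q : ℕ} (h : p ≠ 0 ∨ q ≠ 0) : ∃ a b : Circle, a ^ p ≠ b ^ q := by
  have h_root {n : ℕ} (hn : n ≠ 0) : Circle.exp (Real.pi / n) ^ n ≠ 1 := by
    rw [← Circle.exp_natCast_mul, mul_div_cancel₀ _ (Nat.cast_ne_zero.2 hn)]
    exact Circle.exp_pi_ne_one
  rcases h with hp | hq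
  · exact ⟨_, 1, by simpa only [one_pow] using h_root hp⟩
  · exact ⟨1, _, by simpa only [one_pow] using (h_root hq).symm⟩

/-- For `N ≠ 0`, an `N`-th root of `a` at distance at most `π / N` from `z`, obtained by multiplying
`z` with the principal `N`-th root of `a / z ^ N`. -/
noncomputable def nearbyRoot (a : Circle) (N : ℕ) (z : Circle) : Circle :=
  z * Circle.exp (Complex.arg (a / z ^ N : Circle) / N)

theorem nearbyRoot_pow (a : Circle) {N : ℕ} (hN : N ≠ 0) (z : Circle) :
    nearbyRoot a N z ^ N = a := by
  rw [nearbyRoot, mul_pow, ← Circle.exp_natCast_mul, mul_div_cancel₀ _ (Nat.cast_ne_zero.2 hN),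
    Circle.exp_arg, mul_div_cancel]

theorem dist_nearbyRoot_le (a : Circle) (N : ℕ) (z : Circle) :
    dist z (nearbyRoot a N z) ≤ Real.pi / N := by
  set θ := Complex.arg (a / z ^ N : Circle) / N with hθ
  calc dist z (nearbyRoot a N z)
      = ‖(z : ℂ) * (Complex.exp (Complex.I * θ) - 1)‖ := by
        rw [dist_comm, dist_circle_eq_norm_sub, nearbyRoot, ← hθ, Circle.coe_mul, mul_sub,
          mul_one, mul_comm Complex.I, ← Circle.coe_exp]
    _ = ‖Complex.exp (Complex.I * θ) - 1‖ := by rw [norm_mul, Circle.norm_coe, one_mul]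
    _ ≤ |θ| := Real.norm_exp_I_mul_ofReal_sub_one_le
    _ ≤ Real.pi / N := by
        rw [hθ, abs_div, Nat.abs_cast]
        gcongr
        exact Complex.abs_arg_le_pi _

theorem measurable_nearbyRoot (a : Circle) (N : ℕ) : Measurable (nearbyRoot a N) := by
  have h_ratio : Continuous fun z : Circle ↦ ((a / z ^ N : Circle) : ℂ) := by
    have h_coe : Continuous fun w : Circle ↦ (w : ℂ) := by fun_prop
    exact h_coe.comp (continuous_const.div' (continuous_pow N))
  exact measurable_id.mul <| Circle.exp.continuous.measurable.comp <|
    (Complex.measurable_arg.comp h_ratio.measurable).div_const _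

end Roots

section ConvergenceInMeasure

variable {X : Type*} [MeasurableSpace X] {μ : Measure X}

theorem L0dist_eq_integral_dist (f g : X →ₘ[μ] Circle) :
    L0dist μ f g = ∫ x, dist (f x) (g x) ∂μ := by
  simp only [L0dist, dist_circle_eq_norm_sub]

theorem L0dist_nonneg (f g : X →ₘ[μ] Circle) : 0 ≤ L0dist μ f g :=
  integral_nonneg fun _ ↦ norm_nonneg _

theorem L0dist_self (f : X →ₘ[μ] Circle) : L0dist μ f f = 0 := by
  simp [L0dist]

/-- The class of `x ↦ nearbyRoot a N (f x)`: an element of `L⁰(μ, 𝕋)` with `N`-th power `a` that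
approximates `f`. -/
noncomputable def nearbyRootL0 (a : Circle) (N : ℕ) (f : X →ₘ[μ] Circle) : X →ₘ[μ] Circle :=
  f.compMeasurable (nearbyRoot a N) (measurable_nearbyRoot a N)

theorem nearbyRootL0_pow (a : Circle) {N : ℕ} (hN : N ≠ 0) (f : X →ₘ[μ] Circle) :
    ∀ᵐ x ∂μ, nearbyRootL0 a N f x ^ N = a := by
  filter_upwards [f.coeFn_compMeasurable _ (measurable_nearbyRoot a N)] with x hx
  rw [nearbyRootL0, hx]
  exact nearbyRoot_pow a hN (f x)

variable [IsFiniteMeasure μ]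

theorem integrable_dist_aeEqFun (f g : X →ₘ[μ] Circle) :
    Integrable (fun x ↦ dist (f x) (g x)) μ :=
  integrable_dist_of_boundedSpace f.aestronglyMeasurable g.aestronglyMeasurable

theorem L0dist_triangle (f g h : X →ₘ[μ] Circle) :
    L0dist μ f h ≤ L0dist μ f g + L0dist μ g h := by
  simp only [L0dist_eq_integral_dist]
  rw [← integral_add (integrable_dist_aeEqFun f g) (integrable_dist_aeEqFun g h)]
  exact integral_mono (integrable_dist_aeEqFun f h)
    ((integrable_dist_aeEqFun f g).add (integrable_dist_aeEqFun g h))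
    fun x ↦ dist_triangle (f x) (g x) (h x)

theorem tendsto_nhds_iff_L0dist {ι : Type*} {F : Filter ι} {u : ι → X →ₘ[μ] Circle}
    {f : X →ₘ[μ] Circle} :
    Tendsto u F (𝓝 f) ↔ Tendsto (fun i ↦ L0dist μ f (u i)) F (𝓝 0) := by
  constructor
  · intro hu
    have h_ball {ε : ℝ} (hε : 0 < ε) : {g | L0dist μ f g < ε} ∈ 𝓝 f := by
      have h_open : IsOpen {g | L0dist μ f g < ε} :=
        TopologicalSpace.isOpen_generateFrom_of_mem ⟨f, ε, hε, rfl⟩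
      exact h_open.mem_nhds ((L0dist_self f).trans_lt hε)
    exact tendsto_order.2 ⟨fun ε hε ↦ .of_forall fun i ↦ hε.trans_le (L0dist_nonneg f (u i)),
      fun ε hε ↦ hu (h_ball hε)⟩
  · intro hu
    refine TopologicalSpace.tendsto_nhds_generateFrom_iff.2 ?_
    rintro _ ⟨g, ε, -, rfl⟩ (hf : L0dist μ g f < ε)
    filter_upwards [hu.eventually_lt_const (sub_pos.2 hf)] with i hi
    calc L0dist μ g (u i)
        ≤ L0dist μ g f + L0dist μ f (u i) := L0dist_triangle g f (u i)
      _ < ε := lt_sub_iff_add_lt'.1 hi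

theorem tendsto_measureReal_preimage_compl {K V : Set Circle} (hK : IsCompact K) (hV : IsOpen V)
    (hKV : K ⊆ V) {f : X →ₘ[μ] Circle} (hf : ∀ᵐ x ∂μ, f x ∈ K) :
    Tendsto (fun g : X →ₘ[μ] Circle ↦ μ.real (g ⁻¹' Vᶜ)) (𝓝 f) (𝓝 0) := by
  obtain ⟨δ, hδ, hδV⟩ := hK.exists_thickening_subset_open hV hKV
  have h_markov (g : X →ₘ[μ] Circle) : μ.real (g ⁻¹' Vᶜ) ≤ L0dist μ f g / δ := by
    have h_far : g ⁻¹' Vᶜ ≤ᵐ[μ] {x | δ ≤ dist (f x) (g x)} := by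
      filter_upwards [hf] with x hxK hxV
      refine not_lt.1 fun hx ↦ hxV (hδV (Metric.mem_thickening_iff.2 ⟨f x, hxK, ?_⟩))
      rwa [dist_comm]
    rw [le_div_iff₀' hδ]
    calc δ * μ.real (g ⁻¹' Vᶜ)
        ≤ δ * μ.real {x | δ ≤ dist (f x) (g x)} :=
          mul_le_mul_of_nonneg_left
            (ENNReal.toReal_mono (measure_ne_top _ _) (measure_mono_ae h_far)) hδ.le
      _ ≤ ∫ x, dist (f x) (g x) ∂μ := mul_meas_ge_le_integral_of_nonneg
          (.of_forall fun _ ↦ dist_nonneg) (integrable_dist_aeEqFun f g) δ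
      _ = L0dist μ f g := (L0dist_eq_integral_dist f g).symm
  have h_dist : Tendsto (fun g ↦ L0dist μ f g / δ) (𝓝 f) (𝓝 0) := by
    simpa only [zero_div, id] using (tendsto_nhds_iff_L0dist.1 tendsto_id).div_const δ
  exact squeeze_zero (fun _ ↦ measureReal_nonneg) h_markov h_dist

theorem L0dist_nearbyRootL0_le (a : Circle) (N : ℕ) (f : X →ₘ[μ] Circle) :
    L0dist μ f (nearbyRootL0 a N f) ≤ μ.real univ * Real.pi / N :=
  calc L0dist μ f (nearbyRootL0 a N f)
      ≤ ∫ _, Real.pi / N ∂μ := by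
        rw [L0dist_eq_integral_dist]
        refine integral_mono_ae (integrable_dist_aeEqFun _ _) (integrable_const _) ?_
        filter_upwards [f.coeFn_compMeasurable _ (measurable_nearbyRoot a N)] with x hx
        rw [nearbyRootL0, hx]
        exact dist_nearbyRoot_le a N (f x)
    _ = μ.real univ * Real.pi / N := by rw [integral_const, smul_eq_mul, mul_div_assoc]

theorem tendsto_nearbyRootL0 (a : Circle) (f : X →ₘ[μ] Circle) :
    Tendsto (fun N : ℕ ↦ nearbyRootL0 a N f) atTop (𝓝 f) :=
  tendsto_nhds_iff_L0dist.2 <| squeeze_zero (fun _ ↦ L0dist_nonneg _ _)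
    (fun N ↦ L0dist_nearbyRootL0_le a N f) (tendsto_const_div_atTop_nhds_zero_nat _)

end ConvergenceInMeasure

section Genericity

variable {X ι κ : Type*} [MeasurableSpace X] {μ : Measure X} [IsFiniteMeasure μ] {p q : ℕ}

theorem tendsto_rho_of_disjoint_pow (k : Fin p → ι) (l : Fin q → κ) {K L : Set Circle}
    (hK : IsCompact K) (hL : IsCompact L) (hKL : Disjoint (K ^ p) (L ^ q))
    {fg : (ι → X →ₘ[μ] Circle) × (κ → X →ₘ[μ] Circle)}
    (hf : ∀ i, ∀ᵐ x ∂μ, fg.1 (k i) x ∈ K) (hg : ∀ j, ∀ᵐ x ∂μ, fg.2 (l j) x ∈ L) :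
    Tendsto (fun fg' : (ι → X →ₘ[μ] Circle) × (κ → X →ₘ[μ] Circle) ↦
      rho μ (fun i ↦ ⇑(fg'.1 (k i))) (fun j ↦ ⇑(fg'.2 (l j)))) (𝓝 fg) (𝓝 0) := by
  obtain ⟨V, W, hV, hW, hKV, hLW, hVW⟩ := exists_isOpen_disjoint_pow hK hL hKL
  have hf_tendsto (i : Fin p) : Tendsto
      (fun fg' : (ι → X →ₘ[μ] Circle) × (κ → X →ₘ[μ] Circle) ↦ μ.real (fg'.1 (k i) ⁻¹' Vᶜ))
      (𝓝 fg) (𝓝 0) :=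
    (tendsto_measureReal_preimage_compl hK hV hKV (hf i)).comp
      (((continuous_apply (k i)).comp continuous_fst).tendsto fg)
  have hg_tendsto (j : Fin q) : Tendsto
      (fun fg' : (ι → X →ₘ[μ] Circle) × (κ → X →ₘ[μ] Circle) ↦ μ.real (fg'.2 (l j) ⁻¹' Wᶜ))
      (𝓝 fg) (𝓝 0) :=
    (tendsto_measureReal_preimage_compl hL hW hLW (hg j)).comp
      (((continuous_apply (l j)).comp continuous_snd).tendsto fg)
  refine squeeze_zero (fun _ ↦ rho_nonneg) (fun fg' ↦ rho_le_sum_measureReal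
    (fun i ↦ (fg'.1 (k i)).stronglyMeasurable.measurable)
    (fun j ↦ (fg'.2 (l j)).stronglyMeasurable.measurable) hV.measurableSet hW.measurableSet hVW) ?_
  simpa only [Finset.sum_const_zero, add_zero] using
    (tendsto_finsetSum _ fun i _ ↦ hf_tendsto i).add (tendsto_finsetSum _ fun j _ ↦ hg_tendsto j)

theorem dense_tendsto_rho (k : Fin p → ι) (l : Fin q → κ) {a b : Circle} (hab : a ^ p ≠ b ^ q) :
    Dense {fg : (ι → X →ₘ[μ] Circle) × (κ → X →ₘ[μ] Circle) |
      Tendsto (fun fg' : (ι → X →ₘ[μ] Circle) × (κ → X →ₘ[μ] Circle) ↦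
        rho μ (fun i ↦ ⇑(fg'.1 (k i))) (fun j ↦ ⇑(fg'.2 (l j)))) (𝓝 fg) (𝓝 0)} := by
  rintro ⟨f, g⟩
  have h_approx : Tendsto
      (fun N : ℕ ↦ (fun i ↦ nearbyRootL0 a N (f i), fun j ↦ nearbyRootL0 b N (g j)))
      atTop (𝓝 (f, g)) :=
    (tendsto_pi_nhds.2 fun i ↦ tendsto_nearbyRootL0 a (f i)).prodMk_nhds
      (tendsto_pi_nhds.2 fun j ↦ tendsto_nearbyRootL0 b (g j))
  refine mem_closure_of_tendsto h_approx ?_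
  filter_upwards [eventually_ne_atTop 0] with N hN
  have h_compact (c : Circle) : IsCompact {z : Circle | z ^ N = c} :=
    (isClosed_singleton.preimage (continuous_pow N)).isCompact
  exact tendsto_rho_of_disjoint_pow k l (h_compact a) (h_compact b) (disjoint_roots_pow hab N)
    (fun i ↦ nearbyRootL0_pow a hN (f (k i))) (fun j ↦ nearbyRootL0_pow b hN (g (l j)))

theorem statement0_general (k : Fin p → ι) (l : Fin q → κ) :
    {fg : (ι → X →ₘ[μ] Circle) × (κ → X →ₘ[μ] Circle) |
        rho μ (fun i ↦ ⇑(fg.1 (k i))) (fun j ↦ ⇑(fg.2 (l j))) = 0} ∈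
      residual ((ι → X →ₘ[μ] Circle) × (κ → X →ₘ[μ] Circle)) := by
  by_cases hpq : p ≠ 0 ∨ q ≠ 0
  · obtain ⟨a, b, hab⟩ := exists_pow_ne_pow hpq
    exact residual_of_dense_tendsto (dense_tendsto_rho k l hab)
  · obtain ⟨rfl, rfl⟩ : p = 0 ∧ q = 0 := by tauto
    exact univ_mem' fun fg ↦ rho_fin_zero _ _

end Genericity

/-- For `(X,μ)` a standard Borel space with a non-atomic Borel probability measure, every
`m, n ∈ ℕ` and all indices `1 ≤ k₁,…,k_p ≤ m`, `1 ≤ l₁,…,l_q ≤ n`, the set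
`E = {(f₁,…,f_m,g₁,…,g_n) ∈ L⁰(μ,𝕋)^{m+n} : f_{k₁}⋯f_{k_p} ∩ g_{l₁}⋯g_{l_q} ≈ ∅}`
is comeager in `L⁰(μ,𝕋)^{m+n}`. -/
theorem statement0 {X : Type*} [MeasurableSpace X] [StandardBorelSpace X]
    (μ : Measure X) [IsProbabilityMeasure μ] [NullSingletonClass μ]
    (m n p q : ℕ) (k : Fin p → Fin m) (l : Fin q → Fin n) :
    {fg : (Fin m → (X →ₘ[μ] Circle)) × (Fin n → (X →ₘ[μ] Circle)) |
        rho μ (fun i => ⇑(fg.1 (k i))) (fun j => ⇑(fg.2 (l j))) = 0} ∈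
      residual ((Fin m → (X →ₘ[μ] Circle)) × (Fin n → (X →ₘ[μ] Circle))) :=
  statement0_general k l
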